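/- Let V = V^odd be a finite-dimensional graded vector space concentrated in odd degrees ≥ 3 over ℚ, and (ΛV, d) a Sullivan minimal algebra (so ΛV is the exterior algebra on V). Then dim H(ΛV, d) ≥ dim V. -/

import Mathlib

/-- The cohomology of a cochain complex given by a square-zero operator `d`,
as `ker d / (im d ∩ ker d)`. -/
abbrev cohomologyOf {A : Type*} [AddCommGroup A] [Module ℚ A] (d : A →ₗ[ℚ] A) :=
  LinearMap.ker d ⧸ (LinearMap.range d).comap (LinearMap.ker d).subtype

/-- Coefficientwise extension of a linear map to power series. -/
noncomputable def psLift {S T : Type*} [Ring S] [Algebra ℚ S] [Ring T] [Algebra ℚ T]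
    (f : S →ₗ[ℚ] T) : PowerSeries S →ₗ[ℚ] PowerSeries T where
  toFun P := PowerSeries.mk fun j => f (PowerSeries.coeff j P)
  map_add' P Q := by ext j; simp
  map_smul' q P := by
    ext j
    have : ∀ R : PowerSeries S, PowerSeries.coeff j (q • R) = q • PowerSeries.coeff j R :=
      fun R => rfl
    have h2 : ∀ R : PowerSeries T, PowerSeries.coeff j (q • R) = q • PowerSeries.coeff j R :=
      fun R => rfl
    simp [h2]

theorem coeff_qsmul {S : Type*} [Ring S] [Algebra ℚ S] (q : ℚ) (R : PowerSeries S) (j : ℕ) :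
    PowerSeries.coeff j (q • R) = q • PowerSeries.coeff j R := rfl

@[simp] theorem coeff_psLift {S T : Type*} [Ring S] [Algebra ℚ S] [Ring T] [Algebra ℚ T]
    (f : S →ₗ[ℚ] T) (P : PowerSeries S) (j : ℕ) :
    PowerSeries.coeff j (psLift f P) = f (PowerSeries.coeff j P) := by
  simp [psLift]

/-- The differential on `S[[y]]` with `D y = e`. -/
noncomputable def psD {S : Type*} [Ring S] [Algebra ℚ S]
    (σ D : S →ₗ[ℚ] S) (e : S) : PowerSeries S →ₗ[ℚ] PowerSeries S where
  toFun P := PowerSeries.mk fun j => D (PowerSeries.coeff j P)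
    + ((j : ℚ) + 1) • (σ (PowerSeries.coeff (j+1) P) * e)
  map_add' P Q := by
    ext j; simp only [map_add, PowerSeries.coeff_mk, add_mul, smul_add]; abel
  map_smul' q P := by
    ext j
    simp only [coeff_qsmul, map_smul, PowerSeries.coeff_mk, smul_mul_assoc, smul_add,
      RingHom.id_apply]
    rw [smul_comm]

@[simp] theorem coeff_psD {S : Type*} [Ring S] [Algebra ℚ S]
    (σ D : S →ₗ[ℚ] S) (e : S) (P : PowerSeries S) (j : ℕ) :
    PowerSeries.coeff j (psD σ D e P) = D (PowerSeries.coeff j P)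
    + ((j : ℚ) + 1) • (σ (PowerSeries.coeff (j+1) P) * e) := by
  simp [psD]

/-- Coefficientwise extension of the contractions. -/
noncomputable def psC {V S : Type*} [AddCommGroup V] [Module ℚ V] [Ring S] [Algebra ℚ S]
    (c : Module.Dual ℚ V →ₗ[ℚ] S →ₗ[ℚ] S) :
    Module.Dual ℚ V →ₗ[ℚ] PowerSeries S →ₗ[ℚ] PowerSeries S where
  toFun l := psLift (c l)
  map_add' l l' := by ext P j; simp
  map_smul' q l := by ext P j; simp

@[simp] theorem coeff_psC {V S : Type*} [AddCommGroup V] [Module ℚ V] [Ring S] [Algebra ℚ S]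
    (c : Module.Dual ℚ V →ₗ[ℚ] S →ₗ[ℚ] S) (l : Module.Dual ℚ V) (P : PowerSeries S) (j : ℕ) :
    PowerSeries.coeff j (psC c l P) = c l (PowerSeries.coeff j P) := by
  simp [psC]

/-- Power series with coefficients in a subspace. -/
def psJ {S : Type*} [Ring S] [Algebra ℚ S] (J : Submodule ℚ S) :
    Submodule ℚ (PowerSeries S) where
  carrier := {P | ∀ j, PowerSeries.coeff j P ∈ J}
  add_mem' := by
    intro a b ha hb j
    rw [map_add]; exact J.add_mem (ha j) (hb j)
  zero_mem' := by intro j; simp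
  smul_mem' := by
    intro q a ha j
    rw [coeff_qsmul]; exact J.smul_mem _ (ha j)

theorem mem_psJ {S : Type*} [Ring S] [Algebra ℚ S] (J : Submodule ℚ S) (P : PowerSeries S) :
    P ∈ psJ J ↔ ∀ j, PowerSeries.coeff j P ∈ J := Iff.rfl

/-- A graded-commutative dg algebra with parity operator, contractions and a filtration. -/
structure Core {V S : Type*} [AddCommGroup V] [Module ℚ V] [Ring S] [Algebra ℚ S]
    (σ D : S →ₗ[ℚ] S) (c : Module.Dual ℚ V →ₗ[ℚ] S →ₗ[ℚ] S) (J : ℕ → Submodule ℚ S)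
    (Z : ℕ → Prop) (N : ℕ) : Prop where
  s_mul : ∀ s t, σ (s * t) = σ s * σ t
  s_s : ∀ s, σ (σ s) = s
  s_one : σ 1 = 1
  D_mul : ∀ s t, D (s * t) = D s * t + σ s * D t
  D_D : ∀ s, D (D s) = 0
  D_s : ∀ s, D (σ s) = - σ (D s)
  comm : ∀ e, σ e = -e → ∀ s, e * s = σ s * e
  c_mul : ∀ l s t, c l (s * t) = c l s * t + σ s * c l t
  c_c : ∀ l l' s, c l (c l' s) = - c l' (c l s)
  c_s : ∀ l s, c l (σ s) = - σ (c l s)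
  J_anti : ∀ r s, s ∈ J (r+1) → s ∈ J r
  J_zero : ∀ s, s ∈ J 0
  J_mul : ∀ a b s t, s ∈ J a → t ∈ J b → s * t ∈ J (a + b)
  J_s : ∀ r s, s ∈ J r → σ s ∈ J r
  J_odd : ∀ s, σ s = -s → s ∈ J 2
  D_J : ∀ s, D s ∈ J 1
  one_J : (1 : S) ∉ J 1
  J_N : ∀ r s, N ≤ r → s ∈ J r → s = 0
  move : ∀ r, Z (r+1) → ∀ z ∈ J (r+1), D z ∈ J (r+3) → ∃ b ∈ J r, z - D b ∈ J (r+2)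

theorem self_neg_zero {S : Type*} [AddCommGroup S] [Module ℚ S] {s : S} (h : s = -s) : s = 0 := by
  have h2 : (2 : ℚ) • s = 0 := by
    rw [two_smul]; nth_rewrite 1 [h]; simp
  exact (smul_eq_zero.mp h2).resolve_left (by norm_num)

namespace Core
variable {V S : Type*} [AddCommGroup V] [Module ℚ V] [Ring S] [Algebra ℚ S]
    {σ D : S →ₗ[ℚ] S} {c : Module.Dual ℚ V →ₗ[ℚ] S →ₗ[ℚ] S} {J : ℕ → Submodule ℚ S}
    {Z : ℕ → Prop} {N : ℕ}

theorem odd_sq (H : Core σ D c J Z N) {e : S} (he : σ e = -e) : e * e = 0 := by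
  have := H.comm e he e
  rw [he, neg_mul] at this
  exact self_neg_zero this

theorem odd_mid (H : Core σ D c J Z N) {e : S} (he : σ e = -e) (s : S) : e * s * e = 0 := by
  rw [H.comm e he, mul_assoc, H.odd_sq he, mul_zero]

theorem sum_aux {S : Type*} [AddCommGroup S] [Module ℚ S] (F : ℕ → ℕ → S) (j : ℕ) :
    ((j : ℚ) + 1) • ∑ p ∈ Finset.HasAntidiagonal.antidiagonal (j+1), F p.1 p.2 =
    ∑ p ∈ Finset.HasAntidiagonal.antidiagonal j, (((p.1 : ℚ) + 1) • F (p.1+1) p.2 +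
      ((p.2 : ℚ) + 1) • F p.1 (p.2+1)) := by
  rw [Finset.sum_add_distrib, Finset.smul_sum]
  have h1 : ∑ p ∈ Finset.HasAntidiagonal.antidiagonal (j+1), (p.1 : ℚ) • F p.1 p.2 =
      ∑ p ∈ Finset.HasAntidiagonal.antidiagonal j, ((p.1 : ℚ) + 1) • F (p.1+1) p.2 := by
    rw [Finset.Nat.sum_antidiagonal_succ]; simp
  have h2 : ∑ p ∈ Finset.HasAntidiagonal.antidiagonal (j+1), (p.2 : ℚ) • F p.1 p.2 =
      ∑ p ∈ Finset.HasAntidiagonal.antidiagonal j, ((p.2 : ℚ) + 1) • F p.1 (p.2+1) := by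
    rw [Finset.Nat.sum_antidiagonal_succ']; simp
  rw [← h1, ← h2, ← Finset.sum_add_distrib]
  refine Finset.sum_congr rfl fun p hp => ?_
  rw [← add_smul]
  congr 1
  have := Finset.HasAntidiagonal.mem_antidiagonal.mp hp
  exact_mod_cast this.symm

theorem ps (H : Core σ D c J Z N) {e : S} (he : σ e = -e) (hDe : D e = 0) :
    Core (psLift σ) (psD σ D e) (psC c) (fun r => psJ (J r)) Z N where
  s_mul P Q := by
    ext j; simp [PowerSeries.coeff_mul, H.s_mul]
  s_s P := by ext j; simp [H.s_s]
  s_one := by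
    ext j; simp only [coeff_psLift, PowerSeries.coeff_one]; split_ifs <;> simp [H.s_one]
  D_mul P Q := by
    ext j
    simp only [coeff_psD, PowerSeries.coeff_mul, map_add, map_sum, H.D_mul, H.s_mul, Finset.sum_mul,
      coeff_psLift]
    have := sum_aux (fun a b => σ (PowerSeries.coeff a P) * σ (PowerSeries.coeff b Q) * e) j
    rw [this, ← Finset.sum_add_distrib, ← Finset.sum_add_distrib]
    refine Finset.sum_congr rfl fun p _ => ?_
    simp only [add_mul, mul_add, smul_mul_assoc, mul_smul_comm, mul_assoc,
      H.comm e he (PowerSeries.coeff p.2 Q)]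
    abel
  D_D P := by
    ext j
    simp only [coeff_psD, map_add, map_smul, H.D_D, H.D_mul, H.D_s, H.s_mul, H.s_s, hDe, he,
      mul_zero, add_mul, neg_mul, smul_mul_assoc, mul_assoc, mul_neg, H.odd_sq he, map_zero]
    simp
  D_s P := by
    ext j
    simp only [coeff_psD, coeff_psLift, map_add, map_smul, H.D_s, H.s_mul, H.s_s, he, mul_neg,
      map_neg]
    simp only [smul_neg, neg_add_rev, neg_neg]
    abel
  comm P hP Q := by
    have hP' : ∀ j, σ (PowerSeries.coeff j P) = - PowerSeries.coeff j P := by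
      intro j
      have := congrArg (PowerSeries.coeff j) hP
      simpa using this
    ext j
    rw [PowerSeries.coeff_mul, PowerSeries.coeff_mul, ← Finset.Nat.sum_antidiagonal_swap]
    refine Finset.sum_congr rfl fun p _ => ?_
    simp [H.comm _ (hP' p.2) (PowerSeries.coeff p.1 Q)]
  c_mul l P Q := by
    ext j
    simp [PowerSeries.coeff_mul, H.c_mul, Finset.sum_add_distrib]
  c_c l l' P := by ext j; simpa using H.c_c l l' _
  c_s l P := by ext j; simpa using H.c_s l _
  J_anti r P h j := H.J_anti r _ (h j)
  J_zero P j := H.J_zero _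
  J_mul a b P Q hP hQ j := by
    rw [PowerSeries.coeff_mul]
    exact Submodule.sum_mem _ fun p _ => H.J_mul a b _ _ (hP _) (hQ _)
  J_s r P hP j := by
    rw [coeff_psLift]; exact H.J_s r _ (hP j)
  J_odd P hP j := by
    have := congrArg (PowerSeries.coeff j) hP
    exact H.J_odd _ (by simpa using this)
  D_J P j := by
    rw [coeff_psD]
    refine Submodule.add_mem _ (H.D_J _) (Submodule.smul_mem _ _ ?_)
    have := H.J_mul 0 2 (σ (PowerSeries.coeff (j+1) P)) e (H.J_zero _) (H.J_odd e he)
    exact H.J_anti _ _ this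
  one_J h := by
    have := h 0
    simp only [PowerSeries.coeff_zero_one] at this
    exact H.one_J this
  J_N r P hr hP := by
    ext j; simpa using H.J_N r _ hr (hP j)
  move r hZ z hz hDz := by
    have hq : ∀ j, ∃ b ∈ J r, PowerSeries.coeff j z - D b ∈ J (r+2) := by
      intro j
      refine H.move r hZ _ (hz j) ?_
      have h1 := hDz j
      rw [coeff_psD] at h1
      refine (Submodule.add_mem_iff_left _ (Submodule.smul_mem _ _ ?_)).mp h1
      exact H.J_mul (r+1) 2 _ _ (H.J_s _ _ (hz _)) (H.J_odd e he)
    choose b hb hb2 using hq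
    refine ⟨PowerSeries.mk b, fun j => by simpa using hb j, fun j => ?_⟩
    rw [map_sub, coeff_psD, PowerSeries.coeff_mk, PowerSeries.coeff_mk, ← sub_sub]
    refine Submodule.sub_mem _ (hb2 j) (Submodule.smul_mem _ _ ?_)
    exact H.J_mul r 2 _ _ (H.J_s _ _ (hb _)) (H.J_odd e he)

end Core

/-- `s` is killed by all contractions against functionals vanishing on `U`. -/
def InK {V S : Type*} [AddCommGroup V] [Module ℚ V] [Ring S] [Algebra ℚ S]
    (c : Module.Dual ℚ V →ₗ[ℚ] S →ₗ[ℚ] S) (U : Submodule ℚ V) (s : S) : Prop :=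
  ∀ l : Module.Dual ℚ V, (∀ u ∈ U, l u = 0) → c l s = 0

section InK
variable {V S : Type*} [AddCommGroup V] [Module ℚ V] [Ring S] [Algebra ℚ S]
    {σ D : S →ₗ[ℚ] S} {c : Module.Dual ℚ V →ₗ[ℚ] S →ₗ[ℚ] S} {J : ℕ → Submodule ℚ S}
    {Z : ℕ → Prop} {N : ℕ} {U : Submodule ℚ V}

theorem InK.add {s t : S} (hs : InK c U s) (ht : InK c U t) : InK c U (s + t) :=
  fun l hl => by rw [map_add, hs l hl, ht l hl, add_zero]

theorem InK.sub {s t : S} (hs : InK c U s) (ht : InK c U t) : InK c U (s - t) :=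
  fun l hl => by rw [map_sub, hs l hl, ht l hl, sub_zero]

theorem InK.neg {s : S} (hs : InK c U s) : InK c U (-s) :=
  fun l hl => by rw [map_neg, hs l hl, neg_zero]

theorem InK.smul {s : S} (q : ℚ) (hs : InK c U s) : InK c U (q • s) :=
  fun l hl => by rw [map_smul, hs l hl, smul_zero]

theorem InK.mono {U' : Submodule ℚ V} (h : U ≤ U') {s : S} (hs : InK c U s) : InK c U' s :=
  fun l hl => hs l fun u hu => hl u (h hu)

theorem InK.mul (H : Core σ D c J Z N) {s t : S} (hs : InK c U s) (ht : InK c U t) :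
    InK c U (s * t) :=
  fun l hl => by rw [H.c_mul, hs l hl, ht l hl]; simp

theorem InK.sig (H : Core σ D c J Z N) {s : S} (hs : InK c U s) : InK c U (σ s) :=
  fun l hl => by rw [H.c_s, hs l hl]; simp

theorem InK.ps {P : PowerSeries S} (h : InK (psC c) U P) (j : ℕ) :
    InK c U (PowerSeries.coeff j P) := fun l hl => by
  have := congrArg (PowerSeries.coeff j) (h l hl)
  simpa using this

theorem InK.of_ps {P : PowerSeries S} (h : ∀ j, InK c U (PowerSeries.coeff j P)) :
    InK (psC c) U P := fun l hl => by
  ext j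
  simpa using h j l hl

theorem InK.decomp (H : Core σ D c J Z N) {x : V} {l₀ : Module.Dual ℚ V} (hl₀ : ∀ u ∈ U, l₀ u = 0)
    (hx : l₀ x = 1) {X : S} (hX : σ X = -X) (hcX : ∀ l, c l X = l x • 1) {s : S}
    (hs : InK c (U ⊔ Submodule.span ℚ {x}) s) :
    ∃ a b, InK c U a ∧ InK c U b ∧ s = a + X * b := by
  have key : ∀ l : Module.Dual ℚ V, (∀ u ∈ U, l u = 0) → c l s = l x • c l₀ s := by
    intro l hl
    have : c (l - l x • l₀) s = 0 := by
      apply hs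
      intro u hu
      obtain ⟨y, hy, z, hz, rfl⟩ := Submodule.mem_sup.mp hu
      obtain ⟨q, rfl⟩ := Submodule.mem_span_singleton.mp hz
      simp [hl y hy, hl₀ y hy, hx]; ring
    rw [map_sub, map_smul, LinearMap.sub_apply, LinearMap.smul_apply] at this
    exact sub_eq_zero.mp this
  have hb : InK c U (c l₀ s) := by
    intro l hl
    have h0 : c l₀ (c l₀ s) = 0 := self_neg_zero (H.c_c l₀ l₀ s)
    rw [H.c_c, key l hl, map_smul, h0]; simp
  refine ⟨s - X * c l₀ s, c l₀ s, ?_, hb, by abel⟩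
  intro l hl
  rw [map_sub, H.c_mul, hb l hl, hcX, key l hl]
  simp

theorem InK.stable (H : Core σ D c J Z N) {x : V} {l₀ : Module.Dual ℚ V}
    (hl₀ : ∀ u ∈ U, l₀ u = 0)
    (hx : l₀ x = 1) {X : S} (hX : σ X = -X) (hcX : ∀ l, c l X = l x • 1)
    (hDX : InK c U (D X)) (hst : ∀ s, InK c U s → InK c U (D s)) {s : S}
    (hs : InK c (U ⊔ Submodule.span ℚ {x}) s) :
    InK c (U ⊔ Submodule.span ℚ {x}) (D s) := by
  obtain ⟨a, b, ha, hb, rfl⟩ := InK.decomp H hl₀ hx hX hcX hs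
  have hXK : InK c (U ⊔ Submodule.span ℚ {x}) X := by
    intro l hl
    rw [hcX, hl x (Submodule.mem_sup_right (Submodule.mem_span_singleton_self x)), zero_smul]
  rw [map_add, H.D_mul, hX]
  exact ((hst a ha).mono le_sup_left).add
    (((hDX.mul H hb).mono le_sup_left).add (InK.mul H hXK.neg ((hst b hb).mono le_sup_left)))

end InK

/-- The number of degrees `i ≥ r` (below `N`) in which cohomology does not vanish. -/
noncomputable def cnt (Z : ℕ → Prop) (N r : ℕ) : ℕ :=
  by classical exact ((Finset.range N).filter fun i => r ≤ i ∧ ¬ Z i).card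

theorem cnt_anti (Z : ℕ → Prop) (N r : ℕ) : cnt Z N (r+1) ≤ cnt Z N r := by
  classical
  unfold cnt
  apply Finset.card_le_card
  intro i hi
  simp only [Finset.mem_filter, Finset.mem_range] at hi ⊢
  exact ⟨hi.1, by omega, hi.2.2⟩

theorem cnt_lt (Z : ℕ → Prop) (N r : ℕ) (hr : r < N) (hZ : ¬ Z r) :
    cnt Z N (r+1) < cnt Z N r := by
  classical
  unfold cnt
  apply Finset.card_lt_card
  refine (Finset.ssubset_iff_of_subset ?_).mpr ⟨r, ?_, ?_⟩
  · intro i hi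
    simp only [Finset.mem_filter, Finset.mem_range] at hi ⊢
    exact ⟨hi.1, by omega, hi.2.2⟩
  · simp [hr, hZ]
  · simp

/-- Downward induction on the filtration. -/
theorem phi_of_step {V S A : Type*} [AddCommGroup V] [Module ℚ V] [Ring S] [Algebra ℚ S]
    [Ring A] [Algebra ℚ A]
    {σ D : S →ₗ[ℚ] S} {c : Module.Dual ℚ V →ₗ[ℚ] S →ₗ[ℚ] S} {J : ℕ → Submodule ℚ S}
    {Z : ℕ → Prop} {N : ℕ} (H : Core σ D c J Z N) (hZ0 : ¬ Z 0)
    (d : A →ₗ[ℚ] A) (f : S →ₗ[ℚ] A) (hf : ∀ s, f (D s) ∈ LinearMap.range d) (p : ℕ)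
    (hstep : ∀ r, r < N → ¬ Z r → cnt Z N r ≤ p → ∀ z ∈ J r, D z = 0 → f z ∈ LinearMap.range d) :
    ∀ r, cnt Z N r ≤ p → ∀ z ∈ J r, D z = 0 → f z ∈ LinearMap.range d := by
  have main : ∀ k r, N ≤ r + k → cnt Z N r ≤ p → ∀ z ∈ J r, D z = 0 →
      f z ∈ LinearMap.range d := by
    intro k
    induction k with
    | zero =>
      intro r hr _ z hz _
      rw [H.J_N r z (by omega) hz, map_zero]; exact Submodule.zero_mem _
    | succ k ih =>
      intro r hr hc z hz hDz
      by_cases hrN : N ≤ r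
      · rw [H.J_N r z hrN hz, map_zero]; exact Submodule.zero_mem _
      by_cases hZ : Z r
      · obtain _ | r := r
        · exact absurd hZ hZ0
        obtain ⟨b, _, hb2⟩ := H.move r hZ z hz (by rw [hDz]; exact Submodule.zero_mem _)
        have h1 := ih (r+2) (by omega) ((cnt_anti Z N (r+1)).trans hc) (z - D b) hb2
          (by rw [map_sub, hDz, H.D_D, sub_zero])
        have h2 := Submodule.add_mem _ h1 (hf b)
        rwa [← map_add, sub_add_cancel] at h2
      · exact hstep r (by omega) hZ hc z hz hDz
  intro r
  exact main N r (by omega)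

/-- Stage `p` of the construction. -/
structure Stage {V A S : Type*} [AddCommGroup V] [Module ℚ V] [Ring A] [Algebra ℚ A]
    [Ring S] [Algebra ℚ S]
    (σA d : A →ₗ[ℚ] A) (cA : Module.Dual ℚ V →ₗ[ℚ] A →ₗ[ℚ] A)
    (σ D : S →ₗ[ℚ] S) (c : Module.Dual ℚ V →ₗ[ℚ] S →ₗ[ℚ] S) (J : ℕ → Submodule ℚ S)
    (Z : ℕ → Prop) (N : ℕ) (U : Submodule ℚ V) (p : ℕ) (i : A →ₗ[ℚ] S) (f : S →ₗ[ℚ] A)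
    (ω : A) : Prop where
  core : Core σ D c J Z N
  i_mul : ∀ a b, i (a * b) = i a * i b
  i_one : i 1 = 1
  i_D : ∀ a, D (i a) = i (d a)
  i_c : ∀ l a, c l (i a) = i (cA l a)
  i_s : ∀ a, σ (i a) = i (σA a)
  stable : ∀ s, InK c U s → InK c U (D s)
  stableA : ∀ s, InK cA U s → InK cA U (d s)
  acyc : ∀ s, InK c U s → D s = 0 → ∃ (q : ℚ) (w : S), InK c U w ∧ s = q • 1 + D w
  f_D : ∀ s, f (D s) ∈ LinearMap.range d
  f_phi : ∀ r, cnt Z N r ≤ p → ∀ z ∈ J r, D z = 0 → f z ∈ LinearMap.range d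
  f_i : ∀ a, f (i a) = ω * a
  f_K : ∀ k a, InK c U k → k ∈ J 1 → f (k * i a) = 0
  w_K : InK cA U ω
  w_ne : ∀ b, InK cA U b → d b ≠ ω

theorem Stage.step {V A S : Type*} [AddCommGroup V] [Module ℚ V] [Ring A] [Algebra ℚ A]
    [Ring S] [Algebra ℚ S]
    {σA d : A →ₗ[ℚ] A} {cA : Module.Dual ℚ V →ₗ[ℚ] A →ₗ[ℚ] A} {JA : ℕ → Submodule ℚ A}
    {σ D : S →ₗ[ℚ] S} {c : Module.Dual ℚ V →ₗ[ℚ] S →ₗ[ℚ] S} {J : ℕ → Submodule ℚ S}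
    {Z : ℕ → Prop} {N : ℕ} {U : Submodule ℚ V} {p : ℕ} {i : A →ₗ[ℚ] S} {f : S →ₗ[ℚ] A}
    {ω : A} (HA : Core σA d cA JA Z N) (hZ0 : ¬ Z 0)
    (T : Stage σA d cA σ D c J Z N U p i f ω)
    (x : V) (hxU : x ∉ U) (xA : A) (hxs : σA xA = -xA) (hxc : ∀ l, cA l xA = l x • 1)
    (hdx : InK cA U (d xA)) :
    ∃ (σ' D' : PowerSeries S →ₗ[ℚ] PowerSeries S)
      (c' : Module.Dual ℚ V →ₗ[ℚ] PowerSeries S →ₗ[ℚ] PowerSeries S)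
      (J' : ℕ → Submodule ℚ (PowerSeries S)) (i' : A →ₗ[ℚ] PowerSeries S)
      (f' : PowerSeries S →ₗ[ℚ] A),
      Stage σA d cA σ' D' c' J' Z N (U ⊔ Submodule.span ℚ {x}) (p+1) i' f' (ω * xA) := by
  have H := T.core
  obtain ⟨l₀, hl₀, hx1⟩ : ∃ l₀ : Module.Dual ℚ V, (∀ u ∈ U, l₀ u = 0) ∧ l₀ x = 1 := by
    obtain ⟨g, hg, hU⟩ := Submodule.exists_le_ker_of_notMem hxU
    exact ⟨(g x)⁻¹ • g, fun u hu => by simp [LinearMap.mem_ker.mp (hU hu)], by simp [hg]⟩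
  set X := i xA with hXdef
  have hX : σ X = -X := by rw [T.i_s, hxs, map_neg]
  have hcX : ∀ l, c l X = l x • 1 := by intro l; rw [T.i_c, hxc, map_smul, T.i_one]
  have hDXK : InK c U (D X) := by
    intro l hl; rw [T.i_D, T.i_c, hdx l hl, map_zero]
  obtain ⟨q, w, hw, hqw⟩ := T.acyc (D X) hDXK (H.D_D X)
  have hq : q = 0 := by
    by_contra hq
    apply H.one_J
    have h1 : q • (1 : S) ∈ J 1 := by
      have h2 : q • (1 : S) = D X - D w := by rw [hqw]; abel
      rw [h2]
      exact Submodule.sub_mem _ (H.D_J _) (H.D_J _)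
    have := Submodule.smul_mem _ q⁻¹ h1
    rwa [smul_smul, inv_mul_cancel₀ hq, one_smul] at this
  have hDw : D w = D X := by rw [hqw, hq]; simp
  obtain ⟨φ, hφK, hφs, hφD⟩ : ∃ φ, InK c U φ ∧ σ φ = -φ ∧ D φ = - D X := by
    refine ⟨(-(1/2 : ℚ)) • (w - σ w), (hw.sub (hw.sig H)).smul _, ?_, ?_⟩
    · rw [map_smul, map_sub, H.s_s, ← smul_neg]; congr 1; abel
    · have : σ (D X) = D X := by
        have := H.D_s X
        rw [hX, map_neg, neg_inj] at this
        exact this.symm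
      rw [map_smul, map_sub, H.D_s, hDw, this, sub_neg_eq_add, ← two_smul ℚ, smul_smul]
      norm_num
  set e := X + φ with hedef
  have he : σ e = -e := by rw [hedef, map_add, hX, hφs]; abel
  have hDe : D e = 0 := by rw [hedef, map_add, hφD]; abel
  set U' := U ⊔ Submodule.span ℚ {x} with hU'
  have hUU' : U ≤ U' := le_sup_left
  have hXK : InK c U' X := by
    intro l hl
    rw [hcX, hl x (Submodule.mem_sup_right (Submodule.mem_span_singleton_self x)), zero_smul]
  have heK : InK c U' e := hXK.add (hφK.mono hUU')
  have H' := H.ps he hDe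
  have hce : ∀ s, InK c U s → c l₀ (e * s) = s := by
    intro s hs
    rw [H.c_mul, hs l₀ hl₀, hedef, map_add, hcX, hφK l₀ hl₀, hx1]; simp
  have hdec : ∀ s, InK c U' s → ∃ a b, InK c U a ∧ InK c U b ∧ s = a + e * b := by
    intro s hs
    obtain ⟨a, b, ha, hb, rfl⟩ := InK.decomp H hl₀ hx1 hX hcX hs
    refine ⟨a - φ * b, b, ha.sub (hφK.mul H hb), hb, ?_⟩
    rw [hedef, add_mul]; abel
  have hst : ∀ s, InK c U' s → InK c U' (D s) := fun s hs =>
    InK.stable H hl₀ hx1 hX hcX hDXK T.stable hs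
  let i' : A →ₗ[ℚ] PowerSeries S :=
    { toFun := fun a => PowerSeries.C (i a)
      map_add' := fun a b => by simp
      map_smul' := fun q a => by
        ext j
        rw [map_smul, RingHom.id_apply, coeff_qsmul, PowerSeries.coeff_C, PowerSeries.coeff_C]
        split_ifs <;> simp }
  have hi' : ∀ a, i' a = PowerSeries.C (i a) := fun a => rfl
  let f' : PowerSeries S →ₗ[ℚ] A :=
    { toFun := fun P => f (e * PowerSeries.coeff 0 P)
      map_add' := fun P Q => by rw [map_add, mul_add, map_add]
      map_smul' := fun q P => by
        rw [coeff_qsmul, mul_smul_comm, map_smul, RingHom.id_apply] }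
  have hf' : ∀ P, f' P = f (e * PowerSeries.coeff 0 P) := fun P => rfl
  have hfD' : ∀ P, f' (psD σ D e P) ∈ LinearMap.range d := by
    intro P
    rw [hf', coeff_psD, mul_add, mul_smul_comm, ← mul_assoc, H.odd_mid he, smul_zero, add_zero]
    have : e * D (PowerSeries.coeff 0 P) = - D (e * PowerSeries.coeff 0 P) := by
      rw [H.D_mul, hDe, he]; simp
    rw [this, map_neg]
    exact Submodule.neg_mem _ (T.f_D _)
  refine ⟨psLift σ, psD σ D e, psC c, fun r => psJ (J r), i', f', ?_⟩
  refine ⟨H', ?_, ?_, ?_, ?_, ?_, ?_, ?_, ?_, hfD', ?_, ?_, ?_, ?_, ?_⟩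
  · intro a b; rw [hi', hi', hi', T.i_mul, map_mul]
  · rw [hi', T.i_one, map_one]
  · intro a
    ext j
    rw [hi', hi', coeff_psD, PowerSeries.coeff_succ_C, map_zero, zero_mul, smul_zero, add_zero,
      PowerSeries.coeff_C, PowerSeries.coeff_C]
    split_ifs
    · exact T.i_D a
    · simp
  · intro l a
    ext j
    rw [hi', hi', coeff_psC, PowerSeries.coeff_C, PowerSeries.coeff_C]
    split_ifs
    · exact T.i_c l a
    · simp
  · intro a
    ext j
    rw [hi', hi', coeff_psLift, PowerSeries.coeff_C, PowerSeries.coeff_C]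
    split_ifs
    · exact T.i_s a
    · simp
  · -- stable
    intro P hP
    refine InK.of_ps fun j => ?_
    rw [coeff_psD]
    exact (hst _ (hP.ps j)).add ((((hP.ps (j+1)).sig H).mul H heK).smul _)
  · -- stableA
    intro s hs
    exact InK.stable HA hl₀ hx1 hxs hxc hdx T.stableA hs
  · -- acyc
    intro z hz hDz
    choose a b ha hb hab using fun j => hdec _ (hz.ps j)
    have hj : ∀ j, D (a j) + e * (((j : ℚ) + 1) • a (j+1) - D (b j)) = 0 := by
      intro j
      have h1 := congrArg (PowerSeries.coeff j) hDz
      rw [coeff_psD, hab j, hab (j+1), map_zero] at h1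
      rw [← h1, map_add, map_add, H.D_mul, hDe, he, H.s_mul, he, add_mul (σ (a (j+1))), ← H.comm e he (a (j+1))]
      have : -e * σ (b (j+1)) * e = 0 := by
        rw [neg_mul, neg_mul, H.odd_mid he, neg_zero]
      rw [this, mul_sub, mul_smul_comm]
      simp only [zero_mul, zero_add, add_zero, neg_mul]
      abel
    have hj2 : ∀ j, D (b j) = ((j : ℚ) + 1) • a (j+1) := by
      intro j
      have hK : InK c U (((j : ℚ) + 1) • a (j+1) - D (b j)) :=
        ((ha (j+1)).smul _).sub (T.stable _ (hb j))
      have h1 := congrArg (c l₀) (hj j)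
      rw [map_add, T.stable _ (ha j) l₀ hl₀, hce _ hK, zero_add, map_zero] at h1
      exact (sub_eq_zero.mp h1).symm
    have hj1 : D (a 0) = 0 := by
      have := hj 0
      rw [← hj2 0, sub_self, mul_zero, add_zero] at this
      exact this
    obtain ⟨q, w0, hw0, hq0⟩ := T.acyc (a 0) (ha 0) hj1
    refine ⟨q, PowerSeries.mk (fun j => Nat.casesOn j w0 fun k => ((k : ℚ) + 1)⁻¹ • b k), ?_, ?_⟩
    · refine InK.of_ps fun j => ?_
      rw [PowerSeries.coeff_mk]
      cases j with
      | zero => exact hw0.mono hUU'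
      | succ k => exact ((hb k).mono hUU').smul _
    · ext j
      have hne : ∀ k : ℕ, ((k : ℚ) + 1) ≠ 0 := fun k => by positivity
      rw [map_add, coeff_qsmul, coeff_psD, PowerSeries.coeff_mk, PowerSeries.coeff_mk, hab j,
        PowerSeries.coeff_one]
      simp only [map_smul, smul_mul_assoc, smul_smul]
      rw [mul_inv_cancel₀ (hne j), one_smul, ← H.comm e he]
      cases j with
      | zero => simp only [if_true]; rw [hq0, add_assoc]; rfl
      | succ k =>
        simp only [map_smul]
        rw [hj2 k, smul_smul, inv_mul_cancel₀ (hne k)]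
        simp
  · -- phi
    refine phi_of_step H' hZ0 d f' hfD' (p+1) ?_
    intro r hrN hZ hc z hz hDz
    have h0 := congrArg (PowerSeries.coeff 0) hDz
    rw [coeff_psD, map_zero] at h0
    have hlt := cnt_lt Z N r hrN hZ
    refine T.f_phi (r+1) (by omega) _ ?_ ?_
    · have := H.J_mul 2 r e _ (H.J_odd e he) (hz 0)
      have := H.J_anti (r+1) _ (by rw [show r + 1 + 1 = 2 + r by omega]; exact this)
      exact this
    · rw [H.D_mul, hDe, he, zero_mul, zero_add, neg_mul, eq_neg_of_add_eq_zero_left h0, mul_neg,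
        mul_smul_comm, ← mul_assoc, H.odd_mid he]
      simp
  · -- f_i
    intro a
    rw [hf', hi', PowerSeries.coeff_zero_C, hedef, add_mul, map_add, T.f_K φ a hφK
      (H.J_anti _ _ (H.J_odd φ hφs)), hXdef, ← T.i_mul, T.f_i, add_zero, mul_assoc]
  · -- f_K
    intro k a hk hkJ
    obtain ⟨a0, b0, ha0, hb0, hab⟩ := InK.decomp H hl₀ hx1 hX hcX (hk.ps 0)
    have hφJ : φ ∈ J 1 := H.J_anti _ _ (H.J_odd φ hφs)
    have hXJ : X ∈ J 1 := H.J_anti _ _ (H.J_odd X hX)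
    have ha0J : a0 ∈ J 1 := by
      have h1 : PowerSeries.coeff 0 k ∈ J 1 := hkJ 0
      rw [hab] at h1
      exact (Submodule.add_mem_iff_left _ (H.J_mul 1 0 _ _ hXJ (H.J_zero b0))).mp h1
    rw [hf', hi', PowerSeries.coeff_mul_C, hab]
    have hcalc : e * ((a0 + X * b0) * i a) =
        σ a0 * i (xA * a) + (φ * a0) * i a + (φ * σ b0) * i (xA * a) := by
      rw [T.i_mul, ← hXdef]
      have e1 : X * a0 = σ a0 * X := H.comm X hX a0
      have e2 : X * b0 = σ b0 * X := H.comm X hX b0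
      have e3 : X * (σ b0 * X) = 0 := by rw [← mul_assoc, H.odd_mid hX]
      calc e * ((a0 + X * b0) * i a)
          = (X * a0) * i a + φ * a0 * i a + φ * (X * b0) * i a + X * (X * b0) * i a := by
            rw [hedef]; noncomm_ring
        _ = _ := by rw [e1, e2, e3]; noncomm_ring
    rw [hcalc, map_add, map_add, T.f_K _ _ (ha0.sig H) (H.J_s _ _ ha0J),
      T.f_K _ _ (hφK.mul H ha0) (H.J_mul 1 0 _ _ hφJ (H.J_zero _)),
      T.f_K _ _ (hφK.mul H (hb0.sig H)) (H.J_mul 1 0 _ _ hφJ (H.J_zero _))]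
    simp
  · -- w_K
    intro l hl
    rw [HA.c_mul, T.w_K.mono hUU' l hl, hxc,
      hl x (Submodule.mem_sup_right (Submodule.mem_span_singleton_self x))]
    simp
  · -- w_ne
    intro b hb hdb
    obtain ⟨a, a', ha, ha', rfl⟩ := InK.decomp HA hl₀ hx1 hxs hxc hb
    have h1 := congrArg (cA l₀) hdb
    rw [HA.c_mul, T.w_K l₀ hl₀, hxc, hx1, map_add, HA.D_mul, map_add, map_add,
      T.stableA a ha l₀ hl₀, hdx.mul HA ha' l₀ hl₀, hxs, HA.c_mul, T.stableA a' ha' l₀ hl₀,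
      map_neg, hxc, hx1] at h1
    simp only [zero_mul, zero_add, one_smul, mul_one, neg_mul, one_mul, mul_zero, add_zero] at h1
    refine T.w_ne (σA a') (ha'.sig HA) ?_
    rw [HA.D_s, ← map_neg, h1, HA.s_s]

section Grading
variable {A : Type*} [Ring A] [Algebra ℚ A] (𝒜 : ℕ → Submodule ℚ A) [GradedAlgebra 𝒜]

theorem pj_mem (k : ℕ) (a : A) : GradedAlgebra.proj 𝒜 k a ∈ 𝒜 k := by
  rw [GradedAlgebra.proj_apply]; exact SetLike.coe_mem _

theorem pj_same {k : ℕ} {a : A} (h : a ∈ 𝒜 k) : GradedAlgebra.proj 𝒜 k a = a := by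
  rw [GradedAlgebra.proj_apply, DirectSum.decompose_of_mem_same 𝒜 h]

theorem pj_ne {k j : ℕ} {a : A} (h : a ∈ 𝒜 k) (hkj : k ≠ j) : GradedAlgebra.proj 𝒜 j a = 0 := by
  rw [GradedAlgebra.proj_apply, DirectSum.decompose_of_mem_ne 𝒜 h hkj]

theorem pj_sum (a : A) : ∃ s : Finset ℕ, ∑ k ∈ s, GradedAlgebra.proj 𝒜 k a = a := by
  classical
  refine ⟨(DirectSum.decompose 𝒜 a).support, ?_⟩
  simp only [GradedAlgebra.proj_apply]
  exact DirectSum.sum_support_decompose 𝒜 a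

theorem pj_ext {a b : A} (h : ∀ k, GradedAlgebra.proj 𝒜 k a = GradedAlgebra.proj 𝒜 k b) :
    a = b := by
  apply (DirectSum.decompose 𝒜).injective
  ext k
  exact h k

theorem pj_mul_le {i s : ℕ} {v : A} (hv : v ∈ 𝒜 i) (h : i ≤ s) (a : A) :
    GradedAlgebra.proj 𝒜 s (v * a) = v * GradedAlgebra.proj 𝒜 (s - i) a := by
  simp only [GradedAlgebra.proj_apply]
  exact DirectSum.coe_decompose_mul_of_left_mem_of_le 𝒜 hv h

theorem pj_mul_lt {i s : ℕ} {v : A} (hv : v ∈ 𝒜 i) (h : ¬ i ≤ s) (a : A) :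
    GradedAlgebra.proj 𝒜 s (v * a) = 0 := by
  simp only [GradedAlgebra.proj_apply]
  exact DirectSum.coe_decompose_mul_of_left_mem_of_not_le 𝒜 hv h

/-- Elements with all components of degree `< r` vanishing. -/
def filtJ (r : ℕ) : Submodule ℚ A where
  carrier := {a | ∀ i < r, GradedAlgebra.proj 𝒜 i a = 0}
  add_mem' := by intro a b ha hb i hi; rw [map_add, ha i hi, hb i hi, add_zero]
  zero_mem' := by intro i _; rw [map_zero]
  smul_mem' := by intro q a ha i hi; rw [map_smul, ha i hi, smul_zero]

theorem mem_filtJ (r : ℕ) (a : A) :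
    a ∈ filtJ 𝒜 r ↔ ∀ i < r, GradedAlgebra.proj 𝒜 i a = 0 := Iff.rfl

theorem filtJ_of_mem {r k : ℕ} (h : r ≤ k) {a : A} (ha : a ∈ 𝒜 k) : a ∈ filtJ 𝒜 r :=
  fun i hi => pj_ne 𝒜 ha (by omega)

theorem filtJ_mul (a b : ℕ) (s t : A) (hs : s ∈ filtJ 𝒜 a) (ht : t ∈ filtJ 𝒜 b) :
    s * t ∈ filtJ 𝒜 (a + b) := by
  obtain ⟨F, hF⟩ := pj_sum 𝒜 s
  rw [← hF, Finset.sum_mul]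
  refine Submodule.sum_mem _ fun k _ => ?_
  intro i hi
  by_cases hk : k < a
  · rw [hs k hk, zero_mul, map_zero]
  by_cases hki : k ≤ i
  · rw [pj_mul_le 𝒜 (pj_mem 𝒜 k s) hki, ht _ (by omega), mul_zero]
  · exact pj_mul_lt 𝒜 (pj_mem 𝒜 k s) hki t

end Grading

/-- The data of the theorem. -/
structure Dat {V : Type*} [AddCommGroup V] [Module ℚ V]
    (ℬ : ℕ → Submodule ℚ V) (𝒜 : ℕ → Submodule ℚ (ExteriorAlgebra ℚ V))
    (d : ExteriorAlgebra ℚ V →ₗ[ℚ] ExteriorAlgebra ℚ V) : Prop where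
  hVint : DirectSum.IsInternal ℬ
  hodd : ∀ i : ℕ, (¬ Odd i ∨ i < 3) → ℬ i = ⊥
  hι : ∀ i : ℕ, ∀ v ∈ ℬ i,
      (ExteriorAlgebra.ι ℚ : V →ₗ[ℚ] ExteriorAlgebra ℚ V) v ∈ 𝒜 i
  hd2 : ∀ x, d (d x) = 0
  hddeg : ∀ n : ℕ, ∀ x ∈ 𝒜 n, d x ∈ 𝒜 (n + 1)
  hLeib : ∀ i : ℕ,
      ∀ x ∈ ((LinearMap.range (ExteriorAlgebra.ι ℚ : V →ₗ[ℚ] ExteriorAlgebra ℚ V)) ^ i :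
        Submodule ℚ (ExteriorAlgebra ℚ V)), ∀ y,
        d (x * y) = d x * y + ((-1 : ℚ) ^ i) • (x * d y)
  hmin : ∀ v : V, d ((ExteriorAlgebra.ι ℚ : V →ₗ[ℚ] ExteriorAlgebra ℚ V) v) ∈
      ⨆ i : ℕ, ⨆ _ : 2 ≤ i,
        ((LinearMap.range (ExteriorAlgebra.ι ℚ : V →ₗ[ℚ] ExteriorAlgebra ℚ V)) ^ i :
          Submodule ℚ (ExteriorAlgebra ℚ V))

theorem ext_ind {V : Type*} [AddCommGroup V] [Module ℚ V] {P : ExteriorAlgebra ℚ V → Prop}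
    (h0 : ∀ q : ℚ, P (q • 1)) (hadd : ∀ a b, P a → P b → P (a + b))
    (hm : ∀ v a, P a → P (ExteriorAlgebra.ι ℚ v * a)) (a : ExteriorAlgebra ℚ V) : P a := by
  refine CliffordAlgebra.left_induction (Q := (0 : QuadraticForm ℚ V)) (P := P) ?_ ?_ ?_ a
  · intro r
    rw [Algebra.algebraMap_eq_smul_one]
    exact h0 r
  · exact hadd
  · intro a v ha
    exact hm v a ha

/-- The parity operator. -/
noncomputable def extS (V : Type*) [AddCommGroup V] [Module ℚ V] :
    ExteriorAlgebra ℚ V →ₗ[ℚ] ExteriorAlgebra ℚ V :=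
  (CliffordAlgebra.involute (Q := (0 : QuadraticForm ℚ V))).toLinearMap

/-- The contractions. -/
noncomputable def extC (V : Type*) [AddCommGroup V] [Module ℚ V] :
    Module.Dual ℚ V →ₗ[ℚ] ExteriorAlgebra ℚ V →ₗ[ℚ] ExteriorAlgebra ℚ V :=
  CliffordAlgebra.contractLeft (Q := (0 : QuadraticForm ℚ V))

section Ext
variable {V : Type*} [AddCommGroup V] [Module ℚ V]
open ExteriorAlgebra

theorem extS_mul (a b : ExteriorAlgebra ℚ V) : extS V (a * b) = extS V a * extS V b :=
  map_mul (CliffordAlgebra.involute (Q := (0 : QuadraticForm ℚ V))) a b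

theorem extS_one : extS V 1 = 1 :=
  map_one (CliffordAlgebra.involute (Q := (0 : QuadraticForm ℚ V)))

theorem extS_extS (a : ExteriorAlgebra ℚ V) : extS V (extS V a) = a :=
  CliffordAlgebra.involute_involute (Q := (0 : QuadraticForm ℚ V)) a

theorem extS_ι (v : V) : extS V (ι ℚ v) = - ι ℚ v :=
  CliffordAlgebra.involute_ι (Q := (0 : QuadraticForm ℚ V)) v

theorem extC_one (l : Module.Dual ℚ V) : extC V l 1 = 0 :=
  CliffordAlgebra.contractLeft_one (Q := (0 : QuadraticForm ℚ V)) l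

theorem extC_ι (l : Module.Dual ℚ V) (v : V) : extC V l (ι ℚ v) = l v • 1 := by
  rw [← Algebra.algebraMap_eq_smul_one]
  exact CliffordAlgebra.contractLeft_ι (Q := (0 : QuadraticForm ℚ V)) l v

theorem extC_ι_mul (l : Module.Dual ℚ V) (v : V) (a : ExteriorAlgebra ℚ V) :
    extC V l (ι ℚ v * a) = l v • a - ι ℚ v * extC V l a :=
  CliffordAlgebra.contractLeft_ι_mul (Q := (0 : QuadraticForm ℚ V)) l v a

theorem extC_extC (l l' : Module.Dual ℚ V) (a : ExteriorAlgebra ℚ V) :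
    extC V l (extC V l' a) = - extC V l' (extC V l a) :=
  CliffordAlgebra.contractLeft_comm (Q := (0 : QuadraticForm ℚ V)) l l' a

theorem extC_mul (l : Module.Dual ℚ V) (a b : ExteriorAlgebra ℚ V) :
    extC V l (a * b) = extC V l a * b + extS V a * extC V l b := by
  induction a using ext_ind with
  | h0 q => simp [extC_one, extS_one]
  | hadd x y hx hy => rw [add_mul, map_add, hx, hy, map_add, map_add]; noncomm_ring
  | hm v x hx =>
    rw [mul_assoc, extC_ι_mul, hx, extC_ι_mul, extS_mul, extS_ι]
    simp only [sub_mul, mul_add, smul_mul_assoc, neg_mul, mul_assoc]; abel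

theorem extC_extS (l : Module.Dual ℚ V) (a : ExteriorAlgebra ℚ V) :
    extC V l (extS V a) = - extS V (extC V l a) := by
  induction a using ext_ind with
  | h0 q => simp [extC_one, extS_one]
  | hadd x y hx hy => rw [map_add, map_add, hx, hy, map_add, map_add]; abel
  | hm v x hx =>
    rw [extS_mul, extS_ι, neg_mul, map_neg, extC_ι_mul, hx, extC_ι_mul, map_sub, map_smul,
      extS_mul, extS_ι]
    noncomm_ring

theorem ι_comm (v : V) (a : ExteriorAlgebra ℚ V) : ι ℚ v * a = extS V a * ι ℚ v := by
  induction a using ext_ind with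
  | h0 q => simp [extS_one]
  | hadd x y hx hy => rw [mul_add, hx, hy, map_add, add_mul]
  | hm w x hx =>
    have : ι ℚ v * ι ℚ w = - (ι ℚ w * ι ℚ v) := eq_neg_of_add_eq_zero_left (ι_add_mul_swap v w)
    rw [extS_mul, extS_ι, ← mul_assoc, this, neg_mul, mul_assoc, hx]
    noncomm_ring

theorem odd_comm_aux (e a : ExteriorAlgebra ℚ V) :
    (e - extS V e) * a = extS V a * (e - extS V e) := by
  induction a using ext_ind with
  | h0 q => simp [extS_one]
  | hadd x y hx hy => rw [mul_add, hx, hy, map_add, add_mul]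
  | hm w x hx =>
    have h1 := ι_comm w e
    have h2 := ι_comm w (extS V e)
    rw [extS_extS] at h2
    have h3 : (e - extS V e) * ι ℚ w = - ι ℚ w * (e - extS V e) := by
      rw [sub_mul, ← h2, ← h1]; noncomm_ring
    rw [← mul_assoc, h3, mul_assoc, hx, extS_mul, extS_ι, mul_assoc]

theorem odd_comm (e : ExteriorAlgebra ℚ V) (he : extS V e = -e) (a : ExteriorAlgebra ℚ V) :
    e * a = extS V a * e := by
  have h := odd_comm_aux e a
  rw [he, sub_neg_eq_add, ← two_smul ℚ, smul_mul_assoc, mul_smul_comm] at h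
  exact smul_right_injective _ (two_ne_zero) h

theorem map_contr (l : Module.Dual ℚ V) (x : V) (a : ExteriorAlgebra ℚ V) :
    a - ι ℚ x * extC V l a = ExteriorAlgebra.map (LinearMap.id - l.smulRight x) a := by
  induction a using ext_ind with
  | h0 q => simp [extC_one]
  | hadd y z hy hz => rw [map_add, map_add, ← hy, ← hz]; noncomm_ring
  | hm w y hy =>
    rw [extC_ι_mul, map_mul (ExteriorAlgebra.map _), ← hy, ExteriorAlgebra.map_apply_ι]
    have h1 : ι ℚ x * (ι ℚ x * extC V l y) = 0 := by
      rw [← mul_assoc, ι_sq_zero, zero_mul]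
    have h2 : ι ℚ w * (ι ℚ x * extC V l y) = - (ι ℚ x * (ι ℚ w * extC V l y)) := by
      rw [← mul_assoc, eq_neg_of_add_eq_zero_left (ι_add_mul_swap w x), neg_mul, mul_assoc]
    simp only [LinearMap.sub_apply, LinearMap.id_apply, LinearMap.smulRight_apply, map_sub,
      map_smul, mul_sub, sub_mul, smul_mul_assoc, mul_smul_comm, h1, h2, smul_zero]
    abel

theorem scalar_of_contr [FiniteDimensional ℚ V] (a : ExteriorAlgebra ℚ V)
    (h : ∀ l, extC V l a = 0) : ∃ q : ℚ, a = q • 1 := by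
  classical
  let b := Module.finBasis ℚ V
  have key : ∀ s : Finset (Fin (Module.finrank ℚ V)),
      ExteriorAlgebra.map (LinearMap.id - ∑ i ∈ s, (b.coord i).smulRight (b i)) a = a := by
    intro s
    induction s using Finset.induction_on with
    | empty =>
      rw [Finset.sum_empty, sub_zero, ExteriorAlgebra.map_id]; rfl
    | insert i s hi ih =>
      have h1 : (LinearMap.id - ∑ j ∈ insert i s, (b.coord j).smulRight (b j)) =
          (LinearMap.id - ∑ j ∈ s, (b.coord j).smulRight (b j)) ∘ₗ
          (LinearMap.id - (b.coord i).smulRight (b i)) := by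
        ext v
        have : ∀ j ∈ s, b.coord j (b i) = 0 := by
          intro j hj
          have : i ≠ j := by rintro rfl; exact hi hj
          simp [this]
        simp only [Finset.sum_insert hi, LinearMap.sub_apply, LinearMap.comp_apply,
          LinearMap.id_apply, LinearMap.add_apply, LinearMap.smulRight_apply, map_sub, map_smul,
          LinearMap.sum_apply]
        rw [Finset.sum_eq_zero (f := fun j => b.coord j (b i) • b j)
          (fun j hj => by rw [this j hj, zero_smul])]
        simp
        abel
      rw [h1, ← ExteriorAlgebra.map_comp_map, AlgHom.comp_apply, ← map_contr, h, mul_zero,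
        sub_zero, ih]
  have h2 := key Finset.univ
  have h3 : LinearMap.id - ∑ i, (b.coord i).smulRight (b i) = 0 := by
    ext v
    simp [b.sum_repr]
  rw [h3] at h2
  have h4 : ∀ y : ExteriorAlgebra ℚ V, ∃ q : ℚ,
      ExteriorAlgebra.map (0 : V →ₗ[ℚ] V) y = q • 1 := by
    intro y
    induction y using ext_ind with
    | h0 q => exact ⟨q, by simp⟩
    | hadd x y hx hy =>
      obtain ⟨q, hq⟩ := hx
      obtain ⟨r, hr⟩ := hy
      exact ⟨q + r, by rw [map_add, hq, hr, add_smul]⟩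
    | hm v x hx => exact ⟨0, by rw [map_mul, ExteriorAlgebra.map_apply_ι]; simp⟩
  obtain ⟨q, hq⟩ := h4 a
  exact ⟨q, by rw [← hq, h2]⟩

end Ext

namespace Dat
open ExteriorAlgebra
variable {V : Type*} [AddCommGroup V] [Module ℚ V]
    {ℬ : ℕ → Submodule ℚ V} {𝒜 : ℕ → Submodule ℚ (ExteriorAlgebra ℚ V)} [GradedAlgebra 𝒜]
    {d : ExteriorAlgebra ℚ V →ₗ[ℚ] ExteriorAlgebra ℚ V}

theorem V_ind (H : Dat ℬ 𝒜 d) {P : V → Prop} (h0 : P 0) (hadd : ∀ v w, P v → P w → P (v + w))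
    (hm : ∀ i, ∀ v ∈ ℬ i, P v) (v : V) : P v := by
  have hv : v ∈ iSup ℬ := by rw [H.hVint.submodule_iSup_eq_top]; trivial
  exact Submodule.iSup_induction ℬ (motive := P) hv hm h0 hadd

theorem hom_ind (H : Dat ℬ 𝒜 d) {P : ℕ → ExteriorAlgebra ℚ V → Prop}
    (hadd : ∀ s a b, P s a → P s b → P s (a + b)) (h0 : ∀ s, P s 0)
    (hs : ∀ q : ℚ, P 0 (q • 1))
    (hm : ∀ i s v a, v ∈ ℬ i → a ∈ 𝒜 s → P s a → P (i + s) (ι ℚ v * a)) :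
    ∀ s, ∀ a ∈ 𝒜 s, P s a := by
  have key : ∀ a : ExteriorAlgebra ℚ V, ∀ s, P s (GradedAlgebra.proj 𝒜 s a) := by
    intro a
    induction a using ext_ind with
    | h0 q =>
      intro s
      have h1 : q • (1 : ExteriorAlgebra ℚ V) ∈ 𝒜 0 :=
        Submodule.smul_mem _ _ (SetLike.GradedOne.one_mem)
      by_cases h : s = 0
      · subst h
        rw [pj_same 𝒜 h1]; exact hs q
      · rw [pj_ne 𝒜 h1 (Ne.symm h)]; exact h0 s
    | hadd x y hx hy => intro s; rw [map_add]; exact hadd _ _ _ (hx s) (hy s)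
    | hm v x hx =>
      intro s
      refine H.V_ind (P := fun v => P s (GradedAlgebra.proj 𝒜 s (ι ℚ v * x))) ?_ ?_ ?_ v
      · rw [map_zero, zero_mul, map_zero]; exact h0 s
      · intro v w hv hw
        rw [map_add, add_mul, map_add]; exact hadd _ _ _ hv hw
      · intro i v hv
        by_cases his : i ≤ s
        · rw [pj_mul_le 𝒜 (H.hι i v hv) his]
          have := hm i (s - i) v _ hv (pj_mem 𝒜 (s - i) x) (hx (s - i))
          rwa [show i + (s - i) = s by omega] at this
        · rw [pj_mul_lt 𝒜 (H.hι i v hv) his]; exact h0 s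
  intro s a ha
  have := key a s
  rwa [pj_same 𝒜 ha] at this

theorem zero_of (H : Dat ℬ 𝒜 d) {i : ℕ} (h : ¬ Odd i ∨ i < 3) {v : V} (hv : v ∈ ℬ i) : v = 0 := by
  rw [H.hodd i h] at hv; exact hv

theorem parity (H : Dat ℬ 𝒜 d) : ∀ s, ∀ a ∈ 𝒜 s, extS V a = ((-1 : ℚ) ^ s) • a := by
  refine H.hom_ind (P := fun s a => extS V a = ((-1 : ℚ) ^ s) • a)
    ?_ ?_ ?_ ?_
  · intro s a b ha hb; rw [map_add, ha, hb, smul_add]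
  · intro s; simp
  · intro q; simp [extS_one]
  · intro i s v a hv ha h
    by_cases hi : Odd i
    · rw [extS_mul, extS_ι, h, pow_add, hi.neg_one_pow]; simp
    · rw [H.zero_of (Or.inl hi) hv]; simp

theorem low (H : Dat ℬ 𝒜 d) : ∀ s, ∀ a ∈ 𝒜 s, (s = 1 ∨ s = 2) → a = 0 := by
  refine H.hom_ind (P := fun s a => (s = 1 ∨ s = 2) → a = 0)
    ?_ ?_ ?_ ?_
  · intro s a b ha hb h; rw [ha h, hb h, add_zero]
  · intro s _; rfl
  · intro q h; omega
  · intro i s v a hv ha h hs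
    rw [H.zero_of (Or.inr (by omega)) hv]; simp

theorem pj_extS (H : Dat ℬ 𝒜 d) (k : ℕ) (a : ExteriorAlgebra ℚ V) :
    GradedAlgebra.proj 𝒜 k (extS V a) = ((-1 : ℚ) ^ k) • GradedAlgebra.proj 𝒜 k a := by
  induction a using DirectSum.Decomposition.inductionOn 𝒜 with
  | zero => simp
  | homogeneous m =>
    rename_i i
    rw [H.parity i _ m.2, map_smul]
    by_cases h : i = k
    · subst h; rfl
    · rw [pj_ne 𝒜 m.2 h, smul_zero, smul_zero]
  | add x y hx hy => rw [map_add, map_add, hx, hy, map_add, smul_add]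

theorem pj_d (H : Dat ℬ 𝒜 d) (k : ℕ) (a : ExteriorAlgebra ℚ V) :
    GradedAlgebra.proj 𝒜 (k+1) (d a) = d (GradedAlgebra.proj 𝒜 k a) := by
  induction a using DirectSum.Decomposition.inductionOn 𝒜 with
  | zero => simp
  | homogeneous m =>
    rename_i i
    by_cases h : i = k
    · subst h
      rw [pj_same 𝒜 m.2, pj_same 𝒜 (H.hddeg _ _ m.2)]
    · rw [pj_ne 𝒜 m.2 h, pj_ne 𝒜 (H.hddeg _ _ m.2) (by omega), map_zero]
  | add x y hx hy => rw [map_add, map_add, hx, hy, map_add, map_add]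

theorem pj_d_zero (H : Dat ℬ 𝒜 d) (a : ExteriorAlgebra ℚ V) :
    GradedAlgebra.proj 𝒜 0 (d a) = 0 := by
  induction a using DirectSum.Decomposition.inductionOn 𝒜 with
  | zero => simp
  | homogeneous m =>
    rename_i i
    rw [pj_ne 𝒜 (H.hddeg _ _ m.2) (by omega)]
  | add x y hx hy => rw [map_add, map_add, hx, hy, add_zero]

theorem range_pj (H : Dat ℬ 𝒜 d) (k : ℕ) {a : ExteriorAlgebra ℚ V} (ha : a ∈ LinearMap.range d) :
    GradedAlgebra.proj 𝒜 k a ∈ LinearMap.range d := by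
  obtain ⟨b, rfl⟩ := ha
  cases k with
  | zero => rw [H.pj_d_zero]; exact Submodule.zero_mem _
  | succ k => rw [H.pj_d]; exact ⟨_, rfl⟩

theorem d_one (H : Dat ℬ 𝒜 d) : d 1 = 0 := by
  have := H.hLeib 0 1 (by rw [pow_zero]; exact Submodule.one_le.mp le_rfl) 1
  simpa using this

theorem d_ι_mul (H : Dat ℬ 𝒜 d) (v : V) (y : ExteriorAlgebra ℚ V) :
    d (ι ℚ v * y) = d (ι ℚ v) * y - ι ℚ v * d y := by
  have := H.hLeib 1 (ι ℚ v) (by rw [pow_one]; exact ⟨v, rfl⟩) y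
  rw [this]; simp [sub_eq_add_neg]

theorem extS_dι (H : Dat ℬ 𝒜 d) (v : V) : extS V (d (ι ℚ v)) = d (ι ℚ v) := by
  refine H.V_ind (P := fun v => extS V (d (ι ℚ v)) = d (ι ℚ v)) ?_ ?_ ?_ v
  · simp
  · intro v w hv hw; simp only [map_add, hv, hw]
  · intro i v hv
    by_cases hi : Odd i
    · rw [H.parity _ _ (H.hddeg _ _ (H.hι i v hv)), (hi.add_one).neg_one_pow, one_smul]
    · rw [H.zero_of (Or.inl hi) hv]; simp

theorem d_mul (H : Dat ℬ 𝒜 d) (a b : ExteriorAlgebra ℚ V) :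
    d (a * b) = d a * b + extS V a * d b := by
  induction a using ext_ind with
  | h0 q => simp [H.d_one, extS_one]
  | hadd x y hx hy => rw [add_mul, map_add, hx, hy, map_add, map_add]; noncomm_ring
  | hm v x hx =>
    rw [mul_assoc, H.d_ι_mul, hx, H.d_ι_mul, extS_mul, extS_ι]
    noncomm_ring

theorem d_extS (H : Dat ℬ 𝒜 d) (a : ExteriorAlgebra ℚ V) :
    d (extS V a) = - extS V (d a) := by
  induction a using ext_ind with
  | h0 q => simp [H.d_one, extS_one]
  | hadd x y hx hy => rw [map_add, map_add, hx, hy, map_add, map_add]; abel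
  | hm v x hx =>
    rw [extS_mul, extS_ι, neg_mul, map_neg, H.d_ι_mul, hx, H.d_ι_mul, map_sub, extS_mul,
      extS_mul, extS_ι, H.extS_dι]
    noncomm_ring

theorem odd_J (H : Dat ℬ 𝒜 d) (a : ExteriorAlgebra ℚ V) (ha : extS V a = -a) :
    a ∈ filtJ 𝒜 2 := by
  intro i hi
  have h1 : i = 0 ∨ i = 1 := by omega
  rcases h1 with rfl | rfl
  · have := H.pj_extS 0 a
    rw [ha, map_neg, pow_zero, one_smul] at this
    exact self_neg_zero this.symm
  · exact H.low 1 _ (pj_mem 𝒜 1 a) (Or.inl rfl)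

theorem ι_mul_J (H : Dat ℬ 𝒜 d) (v : V) (a : ExteriorAlgebra ℚ V) : ι ℚ v * a ∈ filtJ 𝒜 2 :=
  filtJ_mul 𝒜 2 0 _ _ (H.odd_J _ (extS_ι v)) (fun i hi => by omega)

theorem one_J (_ : Dat ℬ 𝒜 d) : (1 : ExteriorAlgebra ℚ V) ∉ filtJ 𝒜 1 := by
  intro h
  have := h 0 (by omega)
  rw [pj_same 𝒜 SetLike.GradedOne.one_mem] at this
  exact one_ne_zero this

/-- Vanishing of degree `r` cohomology. -/
def Zr (𝒜 : ℕ → Submodule ℚ (ExteriorAlgebra ℚ V))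
    (d : ExteriorAlgebra ℚ V →ₗ[ℚ] ExteriorAlgebra ℚ V) (r : ℕ) : Prop :=
  ∀ a ∈ 𝒜 r, d a = 0 → a ∈ LinearMap.range d

theorem core (H : Dat ℬ 𝒜 d) {N : ℕ} (hN : ∀ i, N ≤ i → 𝒜 i = ⊥) :
    Core (extS V) d (extC V) (filtJ 𝒜) (Zr 𝒜 d) N where
  s_mul := extS_mul
  s_s := extS_extS
  s_one := extS_one
  D_mul := H.d_mul
  D_D := H.hd2
  D_s := H.d_extS
  comm := odd_comm
  c_mul := extC_mul
  c_c := extC_extC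
  c_s := extC_extS
  J_anti := fun r s h i hi => h i (by omega)
  J_zero := fun s i hi => by omega
  J_mul := filtJ_mul 𝒜
  J_s := fun r s h i hi => by rw [H.pj_extS, h i hi, smul_zero]
  J_odd := H.odd_J
  D_J := fun s i hi => by
    obtain rfl : i = 0 := by omega
    exact H.pj_d_zero s
  one_J := H.one_J
  J_N := fun r s hr h => by
    apply pj_ext 𝒜
    intro k
    rw [map_zero]
    by_cases hk : k < r
    · exact h k hk
    · have := pj_mem 𝒜 k s
      rw [hN k (by omega)] at this
      exact this
  move := fun r hZ z hz hDz => by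
    have h1 : d (GradedAlgebra.proj 𝒜 (r+1) z) = 0 := by
      rw [← H.pj_d]; exact hDz _ (by omega)
    obtain ⟨b0, hb0⟩ := hZ _ (pj_mem 𝒜 (r+1) z) h1
    have hb : d (GradedAlgebra.proj 𝒜 r b0) = GradedAlgebra.proj 𝒜 (r+1) z := by
      rw [← H.pj_d, hb0, pj_same 𝒜 (pj_mem 𝒜 (r+1) z)]
    refine ⟨GradedAlgebra.proj 𝒜 r b0, filtJ_of_mem 𝒜 le_rfl (pj_mem 𝒜 r b0), ?_⟩
    intro i hi
    rw [map_sub, hb]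
    by_cases h : i = r + 1
    · subst h
      rw [pj_same 𝒜 (pj_mem 𝒜 (r+1) z), sub_self]
    · rw [hz i (by omega), pj_ne 𝒜 (pj_mem 𝒜 (r+1) z) (Ne.symm h), sub_zero]

theorem contr_deg (H : Dat ℬ 𝒜 d) (l : Module.Dual ℚ V) (m : ℕ)
    (hl : ∀ i < m, ∀ v ∈ ℬ i, l v = 0) :
    ∀ s, ∀ a ∈ 𝒜 s, ∀ j, s < j + m → GradedAlgebra.proj 𝒜 j (extC V l a) = 0 := by
  refine H.hom_ind (P := fun s a => ∀ j, s < j + m → GradedAlgebra.proj 𝒜 j (extC V l a) = 0)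
    ?_ ?_ ?_ ?_
  · intro s a b ha hb j hj; rw [map_add, map_add, ha j hj, hb j hj, add_zero]
  · intro s j _; simp
  · intro q j _; simp [extC_one]
  · intro i s v a hv ha h j hj
    rw [extC_ι_mul, map_sub, map_smul]
    have e1 : l v • GradedAlgebra.proj 𝒜 j a = 0 := by
      by_cases him : i < m
      · rw [hl i him v hv, zero_smul]
      · rw [pj_ne 𝒜 ha (by omega), smul_zero]
    rw [e1, zero_sub, neg_eq_zero]
    by_cases hij : i ≤ j
    · rw [pj_mul_le 𝒜 (H.hι i v hv) hij, h _ (by omega), mul_zero]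
    · exact pj_mul_lt 𝒜 (H.hι i v hv) hij _

theorem contr_min (H : Dat ℬ 𝒜 d) (l : Module.Dual ℚ V) (x : V) :
    extC V l (d (ι ℚ x)) ∈ filtJ 𝒜 2 := by
  have h0 : ∀ (i : ℕ), ∀ a ∈ (LinearMap.range (ι ℚ : V →ₗ[ℚ] ExteriorAlgebra ℚ V)) ^ (i+1),
      a ∈ filtJ 𝒜 2 := by
    intro i a ha
    rw [pow_succ'] at ha
    refine Submodule.mul_induction_on ha ?_ (fun a b => Submodule.add_mem _)
    rintro _ ⟨v, rfl⟩ y _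
    exact H.ι_mul_J v y
  have h1 : (⨆ i : ℕ, ⨆ _ : 2 ≤ i, ((LinearMap.range (ι ℚ : V →ₗ[ℚ] ExteriorAlgebra ℚ V)) ^ i :
          Submodule ℚ (ExteriorAlgebra ℚ V))) ≤ (filtJ 𝒜 2).comap (extC V l) := by
    refine iSup_le fun i => iSup_le fun hi => ?_
    obtain ⟨k, rfl⟩ : ∃ k, i = k + 1 + 1 := ⟨i - 2, by omega⟩
    rw [pow_succ', Submodule.mul_le]
    rintro _ ⟨v, rfl⟩ y hy
    rw [Submodule.mem_comap, extC_ι_mul]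
    exact Submodule.sub_mem _ (Submodule.smul_mem _ _ (h0 k y hy)) (H.ι_mul_J v _)
  exact h1 (H.hmin x)

theorem dι_InK (H : Dat ℬ 𝒜 d) {U : Submodule ℚ V} {m : ℕ} (hU : ∀ i < m, ℬ i ≤ U) {x : V}
    (hx : x ∈ ℬ m) : InK (extC V) U (d (ι ℚ x)) := by
  intro l hl
  apply pj_ext 𝒜
  intro k
  rw [map_zero]
  by_cases hk : k < 2
  · exact H.contr_min l x k hk
  · exact H.contr_deg l m (fun i hi v hv => hl v (hU i hi hv)) _ _ (H.hddeg _ _ (H.hι m x hx)) k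
      (by omega)

theorem not_Z0 (H : Dat ℬ 𝒜 d) : ¬ Zr 𝒜 d 0 := by
  intro h
  obtain ⟨b, hb⟩ := h 1 SetLike.GradedOne.one_mem H.d_one
  apply H.one_J
  intro i hi
  obtain rfl : i = 0 := by omega
  rw [← hb]; exact H.pj_d_zero b

theorem base [FiniteDimensional ℚ V] (H : Dat ℬ 𝒜 d) {N : ℕ} (hN : ∀ i, N ≤ i → 𝒜 i = ⊥) :
    Stage (extS V) d (extC V) (extS V) d (extC V) (filtJ 𝒜) (Zr 𝒜 d) N ⊥ 0
      LinearMap.id LinearMap.id 1 := by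
  have HC := H.core hN
  have hsc : ∀ s, InK (extC V) ⊥ s → ∃ q : ℚ, s = q • 1 := fun s hs =>
    scalar_of_contr s fun l => hs l fun u hu => by rw [(Submodule.mem_bot ℚ).mp hu, map_zero]
  have hst : ∀ s, InK (extC V) ⊥ s → d s = 0 := by
    intro s hs
    obtain ⟨q, rfl⟩ := hsc s hs
    rw [map_smul, H.d_one, smul_zero]
  have h0K : InK (extC V) ⊥ (0 : ExteriorAlgebra ℚ V) := fun l _ => map_zero _
  refine ⟨HC, fun _ _ => rfl, rfl, fun _ => rfl, fun _ _ => rfl, fun _ => rfl, ?_, ?_, ?_, ?_, ?_,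
    ?_, ?_, ?_, ?_⟩
  · intro s hs; rw [hst s hs]; exact h0K
  · intro s hs; rw [hst s hs]; exact h0K
  · intro s hs _
    obtain ⟨q, rfl⟩ := hsc s hs
    exact ⟨q, 0, h0K, by simp⟩
  · intro s; exact ⟨s, rfl⟩
  · refine phi_of_step HC H.not_Z0 d LinearMap.id (fun s => ⟨s, rfl⟩) 0 ?_
    intro r hr hZ hc
    have := cnt_lt (Zr 𝒜 d) N r hr hZ
    omega
  · intro a; simp
  · intro k a hk hkJ
    obtain ⟨q, rfl⟩ := hsc k hk
    have : q = 0 := by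
      by_contra hq
      apply H.one_J
      have := Submodule.smul_mem _ q⁻¹ hkJ
      rwa [smul_smul, inv_mul_cancel₀ hq, one_smul] at this
    simp [this]
  · intro l _; exact extC_one l
  · intro b hb h
    rw [hst b hb] at h
    exact zero_ne_one h

end Dat

theorem ext_finite (V : Type*) [AddCommGroup V] [Module ℚ V] [FiniteDimensional ℚ V] :
    Module.Finite ℚ (ExteriorAlgebra ℚ V) := by
  have htop : (⨆ i : ℕ, (⋀[ℚ]^i V)) = ⊤ :=
    (DirectSum.Decomposition.isInternal (fun i : ℕ => ⋀[ℚ]^i V)).submodule_iSup_eq_top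
  have hz : ∀ i : ℕ, Module.finrank ℚ V < i → (⋀[ℚ]^i V) = ⊥ := by
    intro i hi
    apply Submodule.finrank_eq_zero.mp
    rw [exteriorPower.finrank_eq, Nat.choose_eq_zero_of_lt hi]
  have h2 : (⨆ i : Fin (Module.finrank ℚ V + 1), (⋀[ℚ]^(i : ℕ) V)) = ⊤ := by
    rw [eq_top_iff, ← htop]
    refine iSup_le fun i => ?_
    by_cases hi : Module.finrank ℚ V < i
    · rw [hz i hi]; exact bot_le
    · exact le_iSup (fun i : Fin (Module.finrank ℚ V + 1) => (⋀[ℚ]^(i : ℕ) V)) ⟨i, by omega⟩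
  rw [Module.finite_def, ← h2]
  refine Submodule.fg_iSup _ fun i => ?_
  exact Module.Finite.iff_fg.mp inferInstance

theorem deg_bound {V : Type*} [AddCommGroup V] [Module ℚ V] [FiniteDimensional ℚ V]
    {𝒜 : ℕ → Submodule ℚ (ExteriorAlgebra ℚ V)} (hA : DirectSum.IsInternal 𝒜) :
    ∃ N, ∀ i, N ≤ i → 𝒜 i = ⊥ := by
  haveI := ext_finite V
  have hfin : {i | 𝒜 i ≠ ⊥}.Finite :=
    WellFoundedGT.finite_ne_bot_of_iSupIndep hA.submodule_iSupIndep
  obtain ⟨M, hM⟩ := hfin.bddAbove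
  refine ⟨M + 1, fun i hi => ?_⟩
  by_contra h
  have := hM h
  omega

namespace Dat
open ExteriorAlgebra
universe u
variable {V : Type u} [AddCommGroup V] [Module ℚ V] [FiniteDimensional ℚ V]
    {ℬ : ℕ → Submodule ℚ V} {𝒜 : ℕ → Submodule ℚ (ExteriorAlgebra ℚ V)} [GradedAlgebra 𝒜]
    {d : ExteriorAlgebra ℚ V →ₗ[ℚ] ExteriorAlgebra ℚ V}

theorem stages (H : Dat ℬ 𝒜 d) {N : ℕ} (hN : ∀ i, N ≤ i → 𝒜 i = ⊥) :
    ∀ p, p ≤ Module.finrank ℚ V → ∃ (S : Type u) (_ : Ring S) (_ : Algebra ℚ S)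
      (σ D : S →ₗ[ℚ] S) (c : Module.Dual ℚ V →ₗ[ℚ] S →ₗ[ℚ] S) (J : ℕ → Submodule ℚ S)
      (U : Submodule ℚ V) (i : ExteriorAlgebra ℚ V →ₗ[ℚ] S) (f : S →ₗ[ℚ] ExteriorAlgebra ℚ V)
      (ω : ExteriorAlgebra ℚ V), Module.finrank ℚ U = p ∧
      Stage (extS V) d (extC V) σ D c J (Zr 𝒜 d) N U p i f ω := by
  intro p
  induction p with
  | zero =>
    intro _
    exact ⟨ExteriorAlgebra ℚ V, inferInstance, inferInstance, extS V, d, extC V, filtJ 𝒜, ⊥,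
      LinearMap.id, LinearMap.id, 1, finrank_bot ℚ V, H.base hN⟩
  | succ p ih =>
    intro hp
    obtain ⟨S, iR, iA, σ, D, c, J, U, i, f, ω, hU, T⟩ := ih (by omega)
    have hne : ∃ m, ¬ ℬ m ≤ U := by
      by_contra hcon
      push Not at hcon
      have : U = ⊤ := by
        rw [eq_top_iff, ← H.hVint.submodule_iSup_eq_top]
        exact iSup_le hcon
      rw [this, finrank_top] at hU
      omega
    classical
    have hm := Nat.find_spec hne
    have hlt : ∀ k < Nat.find hne, ℬ k ≤ U := fun k hk => not_not.mp (Nat.find_min hne hk)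
    obtain ⟨x, hx, hxU⟩ := SetLike.not_le_iff_exists.mp hm
    obtain ⟨σ', D', c', J', i', f', T'⟩ := Stage.step (H.core hN) H.not_Z0 T x hxU (ι ℚ x)
      (extS_ι x) (fun l => extC_ι l x) (H.dι_InK hlt hx)
    refine ⟨PowerSeries S, inferInstance, inferInstance, σ', D', c', J', _, i', f', _, ?_, T'⟩
    have hx0 : x ≠ 0 := fun h => hxU (h ▸ U.zero_mem)
    have hdis : U ⊓ Submodule.span ℚ {x} = ⊥ := by
      rw [eq_bot_iff]
      rintro y ⟨hy1, hy2⟩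
      obtain ⟨q, rfl⟩ := Submodule.mem_span_singleton.mp hy2
      by_cases hq : q = 0
      · simp [hq]
      · exact absurd ((U.smul_mem_iff hq).mp hy1) hxU
    have := Submodule.finrank_sup_add_finrank_inf_eq U (Submodule.span ℚ {x})
    rw [hdis, finrank_bot, finrank_span_singleton hx0, hU] at this
    omega

theorem lt_cnt (H : Dat ℬ 𝒜 d) {N : ℕ} (hN : ∀ i, N ≤ i → 𝒜 i = ⊥) :
    Module.finrank ℚ V < cnt (Zr 𝒜 d) N 0 := by
  obtain ⟨S, iR, iA, σ, D, c, J, U, i, f, ω, hU, T⟩ := H.stages hN _ le_rfl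
  by_contra hcon
  have hUtop : U = ⊤ := Submodule.eq_top_of_finrank_eq hU
  have hD1 : D 1 = 0 := by rw [← T.i_one, T.i_D, H.d_one, map_zero]
  obtain ⟨b, hb⟩ := T.f_phi 0 (by omega) 1 (T.core.J_zero 1) hD1
  rw [← T.i_one, T.f_i, mul_one] at hb
  refine T.w_ne b ?_ hb
  intro l hl
  have : l = 0 := by
    ext v
    exact hl v (by rw [hUtop]; trivial)
  rw [this, map_zero, LinearMap.zero_apply]

theorem final (H : Dat ℬ 𝒜 d) {N : ℕ} (hN : ∀ i, N ≤ i → 𝒜 i = ⊥) :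
    Module.rank ℚ V ≤ Module.rank ℚ (cohomologyOf d) := by
  classical
  let F := (Finset.range N).filter fun i => 0 ≤ i ∧ ¬ Zr 𝒜 d i
  have hF : cnt (Zr 𝒜 d) N 0 = F.card := by
    unfold cnt
    congr
  have hex : ∀ r : F, ∃ a ∈ 𝒜 r, d a = 0 ∧ a ∉ LinearMap.range d := by
    intro r
    have := (Finset.mem_filter.mp r.2).2.2
    unfold Zr at this
    push Not at this
    exact this
  choose a ha hda hna using hex
  let y : F → cohomologyOf d := fun r => Submodule.Quotient.mk ⟨a r, LinearMap.mem_ker.mpr (hda r)⟩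
  have hli : LinearIndependent ℚ y := by
    rw [Fintype.linearIndependent_iff]
    intro g hg r
    have h1 : (∑ s, g s • a s) ∈ LinearMap.range d := by
      have h2 : (∑ s, g s • y s) = Submodule.Quotient.mk
          (∑ s, g s • (⟨a s, LinearMap.mem_ker.mpr (hda s)⟩ : LinearMap.ker d)) := by
        simp only [y, ← Submodule.mkQ_apply, map_sum, map_smul]
      rw [h2, Submodule.Quotient.mk_eq_zero, Submodule.mem_comap] at hg
      simpa using hg
    have h3 := H.range_pj r h1
    rw [map_sum, Finset.sum_eq_single r, map_smul, pj_same 𝒜 (ha r)] at h3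
    · by_contra hgr
      exact hna r (((LinearMap.range d).smul_mem_iff hgr).mp h3)
    · intro s _ hs
      rw [map_smul, pj_ne 𝒜 (ha s) (fun h => hs (Subtype.ext h)), smul_zero]
    · intro h; exact absurd (Finset.mem_univ _) h
  have h4 := hli.cardinal_lift_le_rank
  have h5 := H.lt_cnt hN
  rw [hF] at h5
  rw [← Module.finrank_eq_rank]
  simp only [Cardinal.mk_coe_finset, Cardinal.lift_natCast, Cardinal.lift_uzero] at h4
  exact le_trans (by exact_mod_cast h5.le) h4

end Dat


/-- Let `V = V^odd` be a finite-dimensional graded ℚ-vector space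
concentrated in odd degrees `≥ 3`, and `(ΛV, d)` a Sullivan minimal algebra;
since `V` is oddly graded, `ΛV` is the exterior algebra on `V`.  Then
`dim H(ΛV, d) ≥ dim V`. -/
theorem hilali_conjecture_odd_generators
    {V : Type*} [AddCommGroup V] [Module ℚ V] [FiniteDimensional ℚ V]
    -- grading on V, concentrated in odd degrees ≥ 3
    (ℬ : ℕ → Submodule ℚ V) (hVint : DirectSum.IsInternal ℬ)
    (hodd : ∀ i : ℕ, (¬ Odd i ∨ i < 3) → ℬ i = ⊥)
    -- the induced cohomological grading on ΛV
    (𝒜 : ℕ → Submodule ℚ (ExteriorAlgebra ℚ V))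
    (hAint : DirectSum.IsInternal 𝒜)
    (h1 : (1 : ExteriorAlgebra ℚ V) ∈ 𝒜 0)
    (hAmul : ∀ i j : ℕ, ∀ x ∈ 𝒜 i, ∀ y ∈ 𝒜 j, x * y ∈ 𝒜 (i + j))
    (hι : ∀ i : ℕ, ∀ v ∈ ℬ i,
      (ExteriorAlgebra.ι ℚ : V →ₗ[ℚ] ExteriorAlgebra ℚ V) v ∈ 𝒜 i)
    -- the differential: square zero, of cohomological degree +1, a derivation
    -- with Koszul sign given by word length (= parity, as V is odd)
    (d : ExteriorAlgebra ℚ V →ₗ[ℚ] ExteriorAlgebra ℚ V)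
    (hd2 : ∀ x, d (d x) = 0)
    (hddeg : ∀ n : ℕ, ∀ x ∈ 𝒜 n, d x ∈ 𝒜 (n + 1))
    (hLeib : ∀ i : ℕ,
      ∀ x ∈ ((LinearMap.range (ExteriorAlgebra.ι ℚ : V →ₗ[ℚ] ExteriorAlgebra ℚ V)) ^ i :
        Submodule ℚ (ExteriorAlgebra ℚ V)), ∀ y,
        d (x * y) = d x * y + ((-1 : ℚ) ^ i) • (x * d y))
    -- minimality: d(V) ⊆ Λ^{≥2} V
    (hmin : ∀ v : V, d ((ExteriorAlgebra.ι ℚ : V →ₗ[ℚ] ExteriorAlgebra ℚ V) v) ∈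
      ⨆ i : ℕ, ⨆ _ : 2 ≤ i,
        ((LinearMap.range (ExteriorAlgebra.ι ℚ : V →ₗ[ℚ] ExteriorAlgebra ℚ V)) ^ i :
          Submodule ℚ (ExteriorAlgebra ℚ V))) :
    Module.rank ℚ V ≤ Module.rank ℚ (cohomologyOf d) := by
  letI := hAint.chooseDecomposition
  letI : GradedAlgebra 𝒜 :=
    { one_mem := h1
      mul_mem := fun i j x y hx hy => hAmul i j x hx y hy }
  obtain ⟨N, hN⟩ := deg_bound hAint
  exact Dat.final (ℬ := ℬ) (𝒜 := 𝒜)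
    ⟨hVint, hodd, hι, hd2, hddeg, hLeib, hmin⟩ hN
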